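/- For every integer k ≥ 2, every finite k-uniform forest is obligatory; that is, if F is a finite k-uniform hypergraph whose edge set admits an enumeration E(F) = {e_0, …, e_{n−1}} such that |e_i ∩ (e_0 ∪ … ∪ e_{i−1})| ≤ 1 for every i with 0 < i < n, then every k-uniform hypergraph of chromatic number at least ℵ₁ contains a copy of F. -/

import Mathlib

open Cardinal

universe u

/-- A colouring `f` of the vertices is proper for the edge set `E` if no edge
is monochromatic. -/
def IsProperColoring {V : Type*} {α : Type*} (E : Set (Set V)) (f : V → α) : Prop :=
  ∀ e ∈ E, ∃ x ∈ e, ∃ y ∈ e, f x ≠ f y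

/-- The chromatic number of the hypergraph `(V, E)`. -/
noncomputable def chromaticNumber (V : Type u) (E : Set (Set V)) : Cardinal.{u} :=
  sInf { κ : Cardinal.{u} | ∃ (α : Type u) (f : V → α), #α = κ ∧ IsProperColoring E f }

/-- A finite hypergraph is a *forest* if its edge set admits an enumeration
`e 0, …, e (n-1)` (without repetitions) such that every edge meets the union of the
previous ones in at most one vertex. -/
def IsForest {VF : Type} (EF : Set (Set VF)) : Prop :=
  ∃ (n : ℕ) (e : Fin n → Set VF), Function.Injective e ∧ Set.range e = EF ∧
    ∀ i : Fin n, 0 < (i : ℕ) → (e i ∩ ⋃ j : {j : Fin n // j < i}, e j).ncard ≤ 1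

/-!
Call a set `W` of vertices rich if every `v ∈ W` lies, for each finite set `S`, on an edge inside
`W` that meets `S` at most in `v`. Forests embed greedily into a nonempty rich set, the finite set
`S` being the part of the copy built so far.

If no nonempty set is rich, then every vertex can be assigned a finite set in such a way that each
edge contains a vertex `v` together with some other element of the finite set assigned to `v`.
A proper colouring of the digraph joining each vertex to the elements of its finite set then
properly colours the hypergraph, and a digraph with finite out-degrees has countable chromatic
number.
-/

section FiniteOutDegree

variable {α : Type*}

theorem countable_setOf_reflTransGen {r : α → α → Prop} (hr : ∀ a, {b | r a b}.Countable) (a : α) :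
    {b | Relation.ReflTransGen r a b}.Countable := by
  let step (s : Set α) : Set α := ⋃ b ∈ s, {c | r b c}
  have step_countable (n : ℕ) : (step^[n] {a}).Countable := by
    induction n with
    | zero => exact Set.countable_singleton a
    | succ n ih =>
      rw [Function.iterate_succ_apply']
      exact ih.biUnion fun b _ => hr b
  refine (Set.countable_iUnion step_countable).mono fun b hb => ?_
  induction hb with
  | refl => exact Set.mem_iUnion.2 ⟨0, rfl⟩
  | tail _ hbc ih =>
    obtain ⟨n, hn⟩ := Set.mem_iUnion.1 ih
    refine Set.mem_iUnion.2 ⟨n + 1, ?_⟩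
    rw [Function.iterate_succ_apply']
    exact Set.mem_biUnion hn hbc

-- Let `root x` be the least vertex from which `x` is reachable. It cannot increase along an arrow,
-- and each of its fibres is countable; order the fibres by their root, and each one in type `ω`.
theorem exists_linearOrder_wellFoundedLT_finite_lt {r : α → α → Prop}
    (hr : ∀ a, {b | r a b}.Countable) :
    ∃ _ : LinearOrder α, WellFoundedLT α ∧ ∀ x, {y | r y x ∧ y < x}.Finite := by
  obtain ⟨_, _⟩ := exists_wellFoundedLT α
  let reach (a : α) : Set α := {b | Relation.ReflTransGen r a b}
  have hreach (x : α) : {a | x ∈ reach a}.Nonempty := ⟨x, .refl⟩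
  let root (x : α) : α := wellFounded_lt.min {a | x ∈ reach a} (hreach x)
  have mem_reach_root (x : α) : x ∈ reach (root x) := wellFounded_lt.min_mem _ (hreach x)
  have root_le {x y : α} (h : r y x) : root x ≤ root y :=
    wellFounded_lt.min_le (s := {a | x ∈ reach a}) ((mem_reach_root y).tail h)
  choose idx hidx using fun a =>
    Set.countable_iff_exists_injOn.1 (countable_setOf_reflTransGen hr a)
  let rank (x : α) : α ×ₗ ℕ := toLex (root x, idx (root x) x)
  have rank_injective : Function.Injective rank := fun x y hxy => by
    obtain ⟨hroot, hi⟩ := Prod.ext_iff.1 (toLex.injective hxy)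
    dsimp only at hroot hi
    rw [← hroot] at hi
    exact hidx _ (mem_reach_root x) (hroot ▸ mem_reach_root y) hi
  refine ⟨LinearOrder.lift' rank rank_injective, ⟨InvImage.wf rank wellFounded_lt⟩, fun x => ?_⟩
  have hfin : {y | y ∈ reach (root x) ∧ idx (root x) y < idx (root x) x}.Finite :=
    .of_injOn (fun _ hy => hy.2) ((hidx (root x)).mono fun _ hy => hy.1)
      (Set.finite_lt_nat (idx (root x) x))
  refine hfin.subset fun y ⟨hyx, hlt⟩ => ?_
  obtain h | ⟨h, hi⟩ := Prod.Lex.toLex_lt_toLex.1 (show rank y < rank x from hlt)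
  · exact absurd h (root_le hyx).not_gt
  · dsimp only at h hi
    rw [h] at hi
    exact ⟨h ▸ mem_reach_root y, hi⟩

theorem nonempty_coloring_nat_of_finite_lt [LinearOrder α] [WellFoundedLT α] {G : SimpleGraph α}
    (hG : ∀ x, {y | G.Adj x y ∧ y < x}.Finite) : Nonempty (G.Coloring ℕ) := by
  let greedy (x : α) (c : ∀ y, y < x → ℕ) : ℕ :=
    sInf (Set.range fun y : {y | G.Adj x y ∧ y < x} => c y y.2.2)ᶜ
  let c : α → ℕ := wellFounded_lt.fix greedy
  have hc {x y : α} (hadj : G.Adj x y) (hlt : y < x) : c x ≠ c y := by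
    have hx : c x = sInf (Set.range fun z : {z | G.Adj x z ∧ z < x} => c z)ᶜ :=
      wellFounded_lt.fix_eq greedy x
    have := (hG x).to_subtype
    have hmem := Nat.sInf_mem
      (Set.finite_range fun z : {z | G.Adj x z ∧ z < x} => c z).infinite_compl.nonempty
    rw [← hx] at hmem
    exact fun h => hmem ⟨⟨y, hadj, hlt⟩, h.symm⟩
  refine ⟨SimpleGraph.Coloring.mk c fun {x y} hadj => ?_⟩
  obtain hlt | hlt := hadj.ne.lt_or_gt
  · exact (hc hadj.symm hlt).symm
  · exact hc hadj hlt

theorem nonempty_coloring_nat_fromRel {r : α → α → Prop} (hr : ∀ a, {b | r a b}.Finite) :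
    Nonempty ((SimpleGraph.fromRel r).Coloring ℕ) := by
  obtain ⟨_, _, hlt⟩ := exists_linearOrder_wellFoundedLT_finite_lt fun a => (hr a).countable
  refine nonempty_coloring_nat_of_finite_lt fun x => ((hr x).union (hlt x)).subset ?_
  rintro y ⟨⟨-, hxy | hyx⟩, hy⟩
  · exact .inl hxy
  · exact .inr ⟨hyx, hy⟩

end FiniteOutDegree

section Coloring

variable {V : Type u} {E : Set (Set V)}

theorem IsProperColoring.chromaticNumber_le_aleph0 {α : Type*} [Countable α] {f : V → α}
    (hf : IsProperColoring E f) : chromaticNumber V E ≤ ℵ₀ := by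
  obtain ⟨i, hi⟩ := exists_injective_nat α
  refine csInf_le' ⟨ULift ℕ, fun v => ⟨i (f v)⟩, by simp, fun e he => ?_⟩
  obtain ⟨x, hx, y, hy, hxy⟩ := hf e he
  exact ⟨x, hx, y, hy, fun h => hxy (hi (ULift.up_injective h))⟩

theorem uncountable_of_aleph0_lt_chromaticNumber (hE : ∀ e ∈ E, e.Nontrivial)
    (hχ : ℵ₀ < chromaticNumber V E) : Uncountable V := by
  by_contra h
  have : Countable V := not_uncountable_iff.1 h
  have hid : IsProperColoring E (id : V → V) := hE
  exact hid.chromaticNumber_le_aleph0.not_gt hχ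

end Coloring

section Rich

variable {V : Type*} {E : Set (Set V)} {W : Set V}

/-- A set `W` of vertices is rich if every vertex of `W` lies on edges inside `W` that avoid any
prescribed finite set of other vertices. This is what a greedy embedding into `W` needs. -/
def IsRich (E : Set (Set V)) (W : Set V) : Prop :=
  ∀ v ∈ W, ∀ S : Set V, S.Finite → ∃ e ∈ E, v ∈ e ∧ e ⊆ W ∧ e ∩ S ⊆ {v}

/-- A set `P` of vertices is prunable if finite sets can be assigned to the vertices so that every
edge meeting `P` contains a vertex `v ∈ P` and a second vertex from the finite set of `v`.
It is the obstruction to richness: the largest prunable set has a rich complement. -/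
def IsPrunable (E : Set (Set V)) (P : Set V) : Prop :=
  ∃ f : V → Set V, (∀ v, (f v).Finite) ∧
    ∀ e ∈ E, (e ∩ P).Nonempty → ∃ v ∈ e ∩ P, ∃ x ∈ e ∩ f v, x ≠ v

-- Well-order the index set; a vertex receives its finite set from the first `P i` containing it.
-- An edge is then taken care of by the first `P i` it meets.
theorem IsPrunable.iUnion {ι : Type*} {P : ι → Set V} (hP : ∀ i, IsPrunable E (P i)) :
    IsPrunable E (⋃ i, P i) := by
  obtain ⟨_, _⟩ := exists_wellFoundedLT ι
  choose f hfin hf using hP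
  refine ⟨fun v => ⋃ i ∈ {i | IsLeast {j | v ∈ P j} i}, f i v, fun v => ?_, fun e he hne => ?_⟩
  · have hsub : {i | IsLeast {j | v ∈ P j} i}.Subsingleton := fun i hi j hj => hi.unique hj
    exact hsub.finite.biUnion fun i _ => hfin i v
  · rw [Set.inter_iUnion, Set.nonempty_iUnion] at hne
    obtain ⟨i, hei, hmin⟩ := wellFounded_lt.has_min {i | (e ∩ P i).Nonempty} hne
    obtain ⟨v, ⟨hve, hvi⟩, x, ⟨hxe, hxv⟩, hxne⟩ := hf i e he hei
    have hleast : IsLeast {j | v ∈ P j} i := ⟨hvi, fun j hvj => not_lt.1 (hmin j ⟨v, hve, hvj⟩)⟩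
    exact ⟨v, ⟨hve, Set.mem_iUnion_of_mem i hvi⟩, x, ⟨hxe, Set.mem_biUnion hleast hxv⟩, hxne⟩

theorem isPrunable_sUnion_setOf_isPrunable (E : Set (Set V)) :
    IsPrunable E (⋃₀ {P | IsPrunable E P}) := by
  rw [Set.sUnion_eq_iUnion]
  exact .iUnion Subtype.property

theorem IsPrunable.insert {P : Set V} (hP : IsPrunable E P) {v : V} (hv : v ∉ P) {S : Set V}
    (hS : S.Finite) (hvS : ∀ e ∈ E, v ∈ e → e ⊆ Pᶜ → ∃ x ∈ e ∩ S, x ≠ v) :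
    IsPrunable E (insert v P) := by
  classical
  obtain ⟨f, hfin, hf⟩ := hP
  refine ⟨Function.update f v S, fun w => ?_, fun e he hne => ?_⟩
  · obtain rfl | hwv := eq_or_ne w v
    · rwa [Function.update_self]
    · rw [Function.update_of_ne hwv]
      exact hfin w
  · by_cases heP : (e ∩ P).Nonempty
    · obtain ⟨w, ⟨hwe, hwP⟩, hx⟩ := hf e he heP
      refine ⟨w, ⟨hwe, .inr hwP⟩, ?_⟩
      rwa [Function.update_of_ne (ne_of_mem_of_not_mem hwP hv)]
    · have hePc : e ⊆ Pᶜ := fun x hxe hxP => heP ⟨x, hxe, hxP⟩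
      obtain ⟨w, hwe, rfl | hwP⟩ := hne
      · refine ⟨w, ⟨hwe, .inl rfl⟩, ?_⟩
        rw [Function.update_self]
        exact hvS e he hwe hePc
      · exact absurd hwP (hePc hwe)

theorem isRich_compl_sUnion_isPrunable (E : Set (Set V)) :
    IsRich E (⋃₀ {P | IsPrunable E P})ᶜ := by
  intro v hv S hS
  by_contra! hvS
  refine hv ⟨_, (isPrunable_sUnion_setOf_isPrunable E).insert hv hS fun e he hve heP => ?_,
    Set.mem_insert v _⟩
  exact Set.not_subset.1 (hvS e he hve heP)

theorem IsPrunable.exists_isProperColoring (hE : ∀ e ∈ E, e.Nonempty)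
    (h : IsPrunable E Set.univ) : ∃ c : V → ℕ, IsProperColoring E c := by
  obtain ⟨f, hfin, hf⟩ := h
  obtain ⟨c⟩ := nonempty_coloring_nat_fromRel (r := fun v x => x ∈ f v) hfin
  refine ⟨c, fun e he => ?_⟩
  obtain ⟨v, ⟨hve, -⟩, x, ⟨hxe, hxv⟩, hne⟩ := hf e he (by simpa using hE e he)
  exact ⟨v, hve, x, hxe, c.valid ⟨hne.symm, .inl hxv⟩⟩

theorem exists_nonempty_isRich (hE : ∀ e ∈ E, e.Nonempty)
    (hχ : ℵ₀ < chromaticNumber V E) : ∃ W : Set V, W.Nonempty ∧ IsRich E W := by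
  refine ⟨_, ?_, isRich_compl_sUnion_isPrunable E⟩
  rw [Set.nonempty_compl]
  intro huniv
  have hprune : IsPrunable E (Set.univ : Set V) := huniv ▸ isPrunable_sUnion_setOf_isPrunable E
  obtain ⟨c, hc⟩ := hprune.exists_isProperColoring hE
  exact hc.chromaticNumber_le_aleph0.not_gt hχ

theorem IsRich.infinite (hW : IsRich E W) (hWne : W.Nonempty) (hE : ∀ e ∈ E, e.Nontrivial) :
    W.Infinite := by
  intro hfin
  obtain ⟨v, hv⟩ := hWne
  obtain ⟨e, he, -, heW, hev⟩ := hW v hv W hfin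
  rw [Set.inter_eq_left.2 heW] at hev
  exact (hE e he).not_subset_singleton hev

end Rich

section Embedding

variable {α V : Type*} {E : Set (Set V)} {W : Set V} {k : ℕ} {φ : α → V} {U a : Set α}

theorem IsRich.exists_extend_edge_of_inter_eq_singleton (hW : IsRich E W) (hk : k ≠ 0)
    (hE : ∀ e ∈ E, e.ncard = k) (hU : U.Finite) (hφ : Set.InjOn φ U) (hφW : Set.MapsTo φ U W)
    (ha : a.ncard = k) {p : α} (hp : a ∩ U = {p}) :
    ∃ ψ : α → V, Set.EqOn ψ φ U ∧ Set.InjOn ψ (U ∪ a) ∧ Set.MapsTo ψ (U ∪ a) W ∧ ψ '' a ∈ E := by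
  classical
  obtain ⟨hpa, hpU⟩ : p ∈ a ∩ U := hp ▸ rfl
  obtain ⟨d, hd, hpd, hdW, hdU⟩ := hW (φ p) (hφW hpU) (φ '' U) (hU.image φ)
  have hdU' : Disjoint (d \ {φ p}) (φ '' U) :=
    Set.disjoint_left.2 fun x hx hxU => hx.2 (hdU ⟨hx.1, hxU⟩)
  have ha_fin : a.Finite := Set.finite_of_ncard_ne_zero (ha ▸ hk)
  have hd_fin : d.Finite := Set.finite_of_ncard_ne_zero (hE d hd ▸ hk)
  have hcard : (a \ U).encard = (d \ {φ p}).encard := by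
    rw [← Set.sdiff_inter_self_eq_sdiff, Set.inter_comm, hp, ← ha_fin.sdiff.cast_ncard_eq,
      ← hd_fin.sdiff.cast_ncard_eq, Set.ncard_sdiff_singleton_of_mem hpa,
      Set.ncard_sdiff_singleton_of_mem hpd, ha, hE d hd]
  have : Nonempty V := ⟨φ p⟩
  obtain ⟨g, hg⟩ := ha_fin.sdiff.exists_bijOn_of_encard_eq hcard
  have hψU : Set.EqOn (U.piecewise φ g) φ U := U.piecewise_eqOn φ g
  have hψa : Set.BijOn (U.piecewise φ g) (a \ U) (d \ {φ p}) :=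
    hg.congr fun x hx => (Set.piecewise_eq_of_notMem _ _ _ hx.2).symm
  refine ⟨U.piecewise φ g, hψU, ?_, ?_, ?_⟩
  · rw [← Set.union_sdiff_self, Set.injOn_union Set.disjoint_sdiff_right]
    refine ⟨hψU.injOn_iff.2 hφ, hψa.injOn, fun x hx y hy hxy => ?_⟩
    exact hdU'.le_bot ⟨hψa.mapsTo hy, x, hx, (hψU hx).symm.trans hxy⟩
  · rw [← Set.union_sdiff_self]
    exact (hφW.congr hψU.symm).union (hψa.mapsTo.mono_right (Set.sdiff_subset.trans hdW))
  · rw [← Set.inter_union_sdiff a U, Set.image_union, hψa.image_eq, hp, Set.image_singleton,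
      hψU hpU, Set.union_sdiff_cancel (Set.singleton_subset_iff.2 hpd)]
    exact hd

theorem IsRich.exists_extend_edge (hW : IsRich E W) (hWinf : W.Infinite) (hk : k ≠ 0)
    (hE : ∀ e ∈ E, e.ncard = k) (hU : U.Finite) (hφ : Set.InjOn φ U) (hφW : Set.MapsTo φ U W)
    (ha : a.ncard = k) (haU : (a ∩ U).Subsingleton) :
    ∃ ψ : α → V, Set.EqOn ψ φ U ∧ Set.InjOn ψ (U ∪ a) ∧ Set.MapsTo ψ (U ∪ a) W ∧ ψ '' a ∈ E := by
  classical
  obtain hdisj | ⟨p, hp⟩ := haU.eq_empty_or_singleton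
  · obtain ⟨p, hp⟩ : a.Nonempty := Set.nonempty_of_ncard_ne_zero (ha ▸ hk)
    have hpU : p ∉ U := fun h => hdisj.subset ⟨hp, h⟩
    obtain ⟨w, hwW, hwU⟩ := hWinf.exists_notMem_finite (hU.image φ)
    have hupd : Set.EqOn (Function.update φ p w) φ U := fun x hx =>
      Function.update_of_ne (ne_of_mem_of_not_mem hx hpU) _ _
    have hinj : Set.InjOn (Function.update φ p w) (insert p U) := by
      rw [Set.injOn_insert hpU, hupd.injOn_iff, hupd.image_eq, Function.update_self]
      exact ⟨hφ, hwU⟩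
    have hmaps : Set.MapsTo (Function.update φ p w) (insert p U) W := by
      rintro x (rfl | hx)
      · rwa [Function.update_self]
      · exact hφW.congr hupd.symm hx
    have hinter : a ∩ insert p U = {p} := by
      rw [Set.inter_insert_of_mem hp, hdisj, insert_empty_eq]
    obtain ⟨ψ, hψ, hψinj, hψW, hψE⟩ :=
      hW.exists_extend_edge_of_inter_eq_singleton hk hE (hU.insert p) hinj hmaps ha hinter
    rw [Set.insert_union, Set.insert_eq_of_mem (.inr hp)] at hψinj hψW
    exact ⟨ψ, (hψ.mono (Set.subset_insert p U)).trans hupd, hψinj, hψW, hψE⟩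
  · exact hW.exists_extend_edge_of_inter_eq_singleton hk hE hU hφ hφW ha hp

theorem IsRich.exists_injOn_biUnion {ι : Type*} [LinearOrder ι] (hW : IsRich E W)
    (hWinf : W.Infinite) (hk : k ≠ 0) (hE : ∀ e ∈ E, e.ncard = k) {e : ι → Set α}
    (he : ∀ i, (e i).ncard = k) (hforest : ∀ i, (e i ∩ ⋃ j < i, e j).Subsingleton)
    (s : Finset ι) :
    ∃ φ : α → V, Set.InjOn φ (⋃ i ∈ s, e i) ∧ Set.MapsTo φ (⋃ i ∈ s, e i) W ∧
      ∀ i ∈ s, φ '' e i ∈ E := by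
  induction s using Finset.induction_on_max with
  | empty =>
    obtain ⟨w, -⟩ := hWinf.nonempty
    exact ⟨fun _ => w, by simp, by simp [Set.mapsTo_empty], by simp⟩
  | insert i s his ih =>
    obtain ⟨φ, hφ, hφW, hφE⟩ := ih
    have hfin : (⋃ j ∈ s, e j).Finite := s.finite_toSet.biUnion fun j _ =>
      Set.finite_of_ncard_ne_zero (he j ▸ hk)
    have hsub : (e i ∩ ⋃ j ∈ s, e j).Subsingleton :=
      (hforest i).anti (Set.inter_subset_inter_right _ (Set.biUnion_mono his fun _ _ => subset_rfl))
    obtain ⟨ψ, hψ, hψinj, hψW, hψE⟩ := hW.exists_extend_edge hWinf hk hE hfin hφ hφW (he i) hsub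
    rw [Finset.set_biUnion_insert, Set.union_comm]
    refine ⟨ψ, hψinj, hψW, (Finset.forall_mem_insert ..).2 ⟨hψE, fun j hj => ?_⟩⟩
    rw [(hψ.mono (Set.subset_biUnion_of_mem (u := e) hj)).image_eq]
    exact hφE j hj

-- Transported along `ι`, the partial map `f` becomes a finite partial injection of `β` into itself,
-- which extends to a permutation of `β`.
theorem exists_injective_eqOn_of_finite {β : Type*} {f : α → β} (hU : U.Finite) (hf : Set.InjOn f U)
    (ι : α ↪ β) : ∃ g : α → β, Function.Injective g ∧ Set.EqOn g f U := by
  let ιU : U ≃ ι '' U := Equiv.Set.image ι U ι.injective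
  let f' : ι '' U ↪ β := ιU.symm.toEmbedding.trans ⟨U.domRestrict f, hf.injective⟩
  obtain ⟨σ, hσ⟩ : ∃ σ : β ≃ β, ∀ y : ι '' U, σ y = f' y := by
    cases finite_or_infinite β
    · exact Cardinal.extend_function_finite f' ⟨.refl β⟩
    · exact Cardinal.extend_function_of_lt f'
        ((hU.image ι).lt_aleph0.trans_le (Cardinal.aleph0_le_mk β)) ⟨.refl β⟩
  refine ⟨σ ∘ ι, σ.injective.comp ι.injective, fun x hx => ?_⟩
  exact (hσ (ιU ⟨x, hx⟩)).trans (congrArg (U.domRestrict f) (ιU.symm_apply_apply ⟨x, hx⟩))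

end Embedding

theorem IsForest.exists_enumeration {VF : Type} {EF : Set (Set VF)} (hEF : IsForest EF)
    (hfin : ∀ e ∈ EF, e.Finite) :
    ∃ (n : ℕ) (e : Fin n → Set VF), Set.range e = EF ∧
      ∀ i, (e i ∩ ⋃ j < i, e j).Subsingleton := by
  obtain ⟨n, e, -, rfl, he⟩ := hEF
  refine ⟨n, e, rfl, fun i => ?_⟩
  obtain hi | hi := Nat.eq_zero_or_pos i
  · have hempty : ⋃ j < i, e j = ∅ := by simp [Fin.lt_def, hi]
    simp [hempty]
  · have := ((hfin (e i) ⟨i, rfl⟩).inter_of_left (⋃ j < i, e j)).to_subtype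
    rw [← Set.ncard_le_one_iff_subsingleton]
    simpa only [Set.iUnion_subtype] using he i hi

theorem forest_obligatory_general (k : ℕ) (hk : 2 ≤ k)
    {VF : Type} (EF : Set (Set VF)) (hUnif : ∀ e ∈ EF, e.ncard = k) (hforest : IsForest EF)
    (V : Type u) (E : Set (Set V)) (hE : ∀ e ∈ E, e.ncard = k)
    (hChr : Cardinal.aleph 1 ≤ chromaticNumber V E) (ι : VF ↪ V) :
    ∃ φ : VF → V, Function.Injective φ ∧ ∀ e ∈ EF, φ '' e ∈ E := by
  have hE' (d) (hd : d ∈ E) : d.Nontrivial :=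
    (Set.one_lt_ncard_iff_nontrivial_and_finite.1 (by rwa [hE d hd])).1
  have hk0 : k ≠ 0 := by omega
  have hfin (e) (he : e ∈ EF) : e.Finite := Set.finite_of_ncard_ne_zero (hUnif e he ▸ hk0)
  obtain ⟨n, e, rfl, he⟩ := hforest.exists_enumeration hfin
  obtain ⟨W, hWne, hW⟩ := exists_nonempty_isRich (fun d hd => (hE' d hd).nonempty)
    (Cardinal.aleph0_lt_aleph_one.trans_le hChr)
  obtain ⟨φ, hφ, -, hφE⟩ := hW.exists_injOn_biUnion (hW.infinite hWne hE') hk0 hE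
    (fun i => hUnif _ ⟨i, rfl⟩) he Finset.univ
  obtain ⟨ψ, hψ, hψφ⟩ := exists_injective_eqOn_of_finite
    (Finset.univ.finite_toSet.biUnion fun i _ => hfin _ ⟨i, rfl⟩) hφ ι
  refine ⟨ψ, hψ, Set.forall_mem_range.2 fun i => ?_⟩
  rw [(hψφ.mono (Set.subset_biUnion_of_mem (u := e) (Finset.mem_univ i))).image_eq]
  exact hφE i (Finset.mem_univ i)

/-- Every finite `k`-uniform forest is obligatory: every `k`-uniform hypergraph of
chromatic number at least `ℵ₁` contains a copy of it. -/
theorem forest_obligatory (k : ℕ) (hk : 2 ≤ k)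
    {VF : Type} [Finite VF] (EF : Set (Set VF)) (hUnif : ∀ e ∈ EF, e.ncard = k)
    (hforest : IsForest EF)
    (V : Type u) (E : Set (Set V)) (hE : ∀ e ∈ E, e.ncard = k)
    (hChr : Cardinal.aleph 1 ≤ chromaticNumber V E) :
    ∃ φ : VF → V, Function.Injective φ ∧ ∀ e ∈ EF, φ '' e ∈ E := by
  have : Uncountable V := uncountable_of_aleph0_lt_chromaticNumber
    (fun d hd => (Set.one_lt_ncard_iff_nontrivial_and_finite.1 (by rwa [hE d hd])).1)
    (Cardinal.aleph0_lt_aleph_one.trans_le hChr)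
  obtain ⟨ι⟩ := nonempty_embedding_nat VF
  exact forest_obligatory_general k hk EF hUnif hforest V E hE hChr
    (ι.trans (Infinite.natEmbedding V))
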